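/- Global consistency does not restrict dual weakly monotone behaviorally correct full-information learning from informants: [τ(Cons) Inf G WMon^d Bc] = [Inf G WMon^d Bc]. -/

import Mathlib

open Filter Classical

namespace InfBc

/-! ### Basic notions: r.e. sets, informants, learners -/

/-- The `e`-th recursively enumerable set (via an acceptable numbering of
partial computable functions, `W e = dom φ_e`). -/
def W (e : ℕ) : Set ℕ := {x | ((Denumerable.ofNat Nat.Partrec.Code e).eval x).Dom}

/-- A language is recursively enumerable. -/
def RE (L : Set ℕ) : Prop := ∃ e, W e = L

abbrev Datum := ℕ × Bool
abbrev Seq := List Datum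
abbrev Informant := ℕ → Datum
abbrev HypSeq := ℕ → Part ℕ
/-- Learners are partial functions; all input types are coded into `ℕ`. -/
abbrev Learner := ℕ →. ℕ
abbrev Restriction := HypSeq → Informant → Prop

/-- Positive information of an infinite sequence. -/
def posI (I : Informant) : Set ℕ := {x | ∃ n, I n = (x, true)}
/-- Negative information of an infinite sequence. -/
def negI (I : Informant) : Set ℕ := {x | ∃ n, I n = (x, false)}

/-- `I` is an informant for the language `L`. -/
def IsInformant (I : Informant) (L : Set ℕ) : Prop := posI I = L ∧ negI I = Lᶜ

/-- `I` is an informant (for some language), i.e. `I ∈ Inf`. -/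
def IsInf (I : Informant) : Prop := IsInformant I (posI I)

/-- `I` is a canonical informant. -/
def Canonical (I : Informant) : Prop := ∀ x, I x = (x, true) ∨ I x = (x, false)

/-- `I[n]`, the length-`n` initial segment of `I`. -/
def segment (I : Informant) (n : ℕ) : Seq := (List.range n).map I

/-- Positive information of a finite sequence. -/
def posS (σ : Seq) : Set ℕ := {x | (x, true) ∈ σ}
/-- Negative information of a finite sequence. -/
def negS (σ : Seq) : Set ℕ := {x | (x, false) ∈ σ}
/-- The content of a finite sequence, as a set. -/
def contentS (σ : Seq) : Set Datum := {a | a ∈ σ}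

/-! ### Interaction operators -/

abbrev InteractionOperator := Learner → Informant → HypSeq

/-- Full-information (Gold-style) interaction: `G(h,I)(i) = h(I[i])`. -/
def Gop : InteractionOperator := fun h I i => h (Encodable.encode (segment I i))

/-- Set-driven interaction: `Sd(h,I)(i) = h(content(I[i]))`. -/
def Sdop : InteractionOperator := fun h I i => h (Encodable.encode (segment I i).toFinset)

/-- The iterated evaluation of an iterative learner on a finite sequence:
start with the initial hypothesis `h(none)` and feed the data one by one. -/
def iterExtend (h : Learner) (σ : Seq) : Part ℕ :=
  σ.foldl (fun pe a => pe.bind fun e => h (Encodable.encode (some (e, a))))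
    (h (Encodable.encode (none : Option (ℕ × Datum))))

/-- Iterative interaction: `It(h,I)(i)` is obtained by feeding `I[i]` one datum
at a time, each time updating the previous hypothesis. -/
def Itop : InteractionOperator := fun h I i => iterExtend h (segment I i)

/-- An iterative learner is confluent if the order and multiplicity in which
the content is presented does not matter. -/
def ConfluentLearner (h : Learner) : Prop :=
  ∀ σ τ : Seq, contentS σ = contentS τ → iterExtend h σ = iterExtend h τ

/-- Confluently iterative interaction. -/
noncomputable def CflItop : InteractionOperator := fun h I i =>
  if ConfluentLearner h then iterExtend h (segment I i) else Part.none

/-- `β ≼ β'`: every (partial computable) `β`-learner can be translated into a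
`β'`-learner with the same hypothesis sequence on every informant. -/
def OpLe (β β' : InteractionOperator) : Prop :=
  ∀ h : Learner, Partrec h → ∃ h' : Learner, Partrec h' ∧
    ∀ I : Informant, IsInf I → ∀ n, β h I n = β' h' I n

/-! ### Learning restrictions -/

/-- The trivial restriction `T`. -/
def TT : Restriction := fun _ _ => True

/-- Explanatory identification. -/
def Ex : Restriction := fun p I =>
  ∃ q, W q = posI I ∧ ∀ᶠ n in atTop, p n = Part.some q

/-- Behaviorally correct identification. -/
def Bc : Restriction := fun p I => ∀ᶠ n in atTop, ∃ e ∈ p n, W e = posI I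

/-- Consistency of a hypothesis with a finite sequence of data. -/
def ConsH (e : ℕ) (σ : Seq) : Prop := posS σ ⊆ W e ∧ negS σ ∩ W e = ∅

/-- Consistency of a hypothesis sequence with an informant. -/
def Cons : Restriction := fun p I => ∀ n, ∃ e ∈ p n, ConsH e (segment I n)

/-- Strongly monotone. -/
def SMon : Restriction := fun p _ =>
  ∀ s t, s ≤ t → ∀ e ∈ p s, ∀ e' ∈ p t, W e ⊆ W e'

/-- Dual strongly monotone. -/
def SMond : Restriction := fun p _ =>
  ∀ s t, s ≤ t → ∀ e ∈ p s, ∀ e' ∈ p t, W e' ⊆ W e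

/-- Monotone. -/
def Mon : Restriction := fun p I =>
  ∀ s t, s ≤ t → ∀ e ∈ p s, ∀ e' ∈ p t, W e ∩ posI I ⊆ W e' ∩ posI I

/-- Dual monotone. -/
def Mond : Restriction := fun p I =>
  ∀ s t, s ≤ t → ∀ e ∈ p s, ∀ e' ∈ p t, (W e)ᶜ ∩ negI I ⊆ (W e')ᶜ ∩ negI I

/-- Weakly monotone. -/
def WMon : Restriction := fun p I =>
  ∀ s t, s ≤ t → ∀ e ∈ p s, ConsH e (segment I t) → ∀ e' ∈ p t, W e ⊆ W e'

/-- Dual weakly monotone. -/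
def WMond : Restriction := fun p I =>
  ∀ s t, s ≤ t → ∀ e ∈ p s, ConsH e (segment I t) → ∀ e' ∈ p t, W e' ⊆ W e

/-- Cautious. -/
def Caut : Restriction := fun p _ =>
  ∀ s t, s < t → ∀ e ∈ p s, ∀ e' ∈ p t, ¬ W e' ⊂ W e

/-- Target cautious. -/
def CautTar : Restriction := fun p I =>
  ∀ s, ∀ e ∈ p s, ¬ posI I ⊂ W e

/-- Finitely cautious. -/
def CautFin : Restriction := fun p _ =>
  ∀ s t, s < t → ∀ e ∈ p s, ∀ e' ∈ p t, W e' ⊂ W e → (W e').Infinite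

/-- Infinitely cautious. -/
def CautInf : Restriction := fun p _ =>
  ∀ s t, s < t → ∀ e ∈ p s, ∀ e' ∈ p t, W e' ⊂ W e → (W e').Finite

/-! ### Learnability -/

/-- The class of admissible learners: all partial computable learners. -/
def AllL : Learner → Prop := fun _ => True
/-- The class of admissible learners: total computable learners (`ℛ`). -/
def TotalL : Learner → Prop := fun h => ∀ x, (h x).Dom
/-- Admissible informants: all informants (`Inf`). -/
def AllI : Informant → Prop := fun _ => True

/-- `h` learns `L` in the setting given by admissible informants `P`,
interaction operator `β` and local restriction `δ`. -/
def LearnsWith (P : Informant → Prop) (β : InteractionOperator) (δ : Restriction)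
    (h : Learner) (L : Set ℕ) : Prop :=
  RE L ∧ ∀ I : Informant, P I → IsInformant I L → δ (β h I) I

/-- `[τ(α) C P β δ]`: the collection of all classes of languages learnable by
some learner in `C` that satisfies the global restriction `α` on all admissible
informants, under interaction operator `β` and local restriction `δ`. -/
def Learnable (α : Restriction) (C : Learner → Prop) (P : Informant → Prop)
    (β : InteractionOperator) (δ : Restriction) : Set (Set (Set ℕ)) :=
  {𝓛 | ∃ h : Learner, Partrec h ∧ C h ∧
        (∀ I : Informant, IsInf I → P I → α (β h I) I) ∧
        ∀ L ∈ 𝓛, LearnsWith P β δ h L}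

/-! ### Properties of restrictions -/

/-- A learning restriction is delayable if it is preserved under postponing
hypotheses along a non-decreasing unbounded function. -/
def Delayable (δ : Restriction) : Prop :=
  ∀ I I' : Informant, IsInf I → IsInf I' → Set.range I = Set.range I' →
    ∀ (p : HypSeq) (s : ℕ → ℕ), Monotone s → (∀ m, ∃ n, m ≤ s n) →
      δ p I → (∀ n, contentS (segment I (s n)) ⊆ contentS (segment I' n)) →
      δ (fun n => p (s n)) I'

/-- A learning restriction is semantic if it is indifferent to replacing the
hypothesis sequence by a semantically equivalent one. -/
def Semantic (δ : Restriction) : Prop :=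
  ∀ (p p' : HypSeq) (I : Informant), δ p I →
    (∀ i, (p i).Dom ↔ (p' i).Dom) →
    (∀ i, ∀ e ∈ p i, ∀ e' ∈ p' i, W e = W e') →
    δ p' I


open Nat.Partrec in
/-- `k` steps suffice for `c` on `n` to produce a hypothesis that enumerates `y`. -/
def HitK (c : Code) (k n y : ℕ) : Prop :=
  ((Code.evaln k c n).bind fun e => Code.evaln k (Denumerable.ofNat Code e) y).isSome = true

open Nat.Partrec in
/-- `k` steps suffice for `c` to converge on `n`. -/
def DefK (c : Code) (k n : ℕ) : Prop := (Code.evaln k c n).isSome = true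

open Nat.Partrec in
/-- Stage-`k` approximation of the new hypothesis. -/
def StageK (c : Code) (σ : Seq) (x k : ℕ) : Prop :=
  (∃ d ∈ σ, d = (x, true)) ∨
  ((¬ ∃ d ∈ σ, d = (x, false)) ∧
   (∀ i ∈ List.range (σ.length + 1),
      (¬ ∀ d ∈ σ, d.2 = false ∨ ∃ d' ∈ σ.take i, d' = d) ∨
      (DefK c k (Encodable.encode (σ.take i)) ∧
        ∀ d ∈ σ, d.2 = false ∨ HitK c k (Encodable.encode (σ.take i)) d.1)) ∧
   (HitK c k (Encodable.encode σ) x ∨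
      ∃ d ∈ σ, d.2 = false ∧ HitK c k (Encodable.encode σ) d.1))

/-- The language of the new hypothesis. -/
def NewLang (h : Learner) (σ : Seq) : Set ℕ :=
  {x | x ∈ posS σ ∨ (x ∉ negS σ ∧
    (∀ i ≤ σ.length, posS σ ⊆ posS (σ.take i) →
      ∃ e ∈ h (Encodable.encode (σ.take i)), posS σ ⊆ W e) ∧
    ∃ e ∈ h (Encodable.encode σ), x ∈ W e ∨ ∃ y ∈ negS σ, y ∈ W e)}

section comp
open Nat.Partrec Primrec

theorem ppForall {α β : Type} [Primcodable α] [Primcodable β] {l : α → List β} {P : α → β → Prop}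
    (hl : Primrec l) (hP : PrimrecPred fun p : α × β => P p.1 p.2) :
    PrimrecPred fun a => ∀ b ∈ l a, P a b := by
  have h1 : PrimrecRel fun (b : β) (a : α) => P a b :=
    hP.comp (Primrec.pair Primrec.snd Primrec.fst)
  exact h1.forall_mem_list.comp hl Primrec.id

theorem ppExists {α β : Type} [Primcodable α] [Primcodable β] {l : α → List β} {P : α → β → Prop}
    (hl : Primrec l) (hP : PrimrecPred fun p : α × β => P p.1 p.2) :
    PrimrecPred fun a => ∃ b ∈ l a, P a b := by
  have h1 : PrimrecRel fun (b : β) (a : α) => P a b :=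
    hP.comp (Primrec.pair Primrec.snd Primrec.fst)
  exact h1.exists_mem_list.comp hl Primrec.id

theorem ppHit {α : Type} [Primcodable α] (c : Code) {k n y : α → ℕ} (hk : Primrec k)
    (hn : Primrec n) (hy : Primrec y) : PrimrecPred fun a => HitK c (k a) (n a) (y a) := by
  have h1 : Primrec fun a => (Code.evaln (k a) c (n a)) :=
    Code.primrec_evaln.comp ((hk.pair (Primrec.const c)).pair hn)
  have h2 : Primrec₂ fun (a : α) (e : ℕ) =>
      Code.evaln (k a) (Denumerable.ofNat Code e) (y a) :=
    (Code.primrec_evaln.comp (((hk.comp fst).pair ((Primrec.ofNat Code).comp snd)).pair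
      (hy.comp fst))).to₂
  exact Primrec.eq.comp (Primrec.option_isSome.comp (Primrec.option_bind h1 h2))
    (Primrec.const true)

theorem ppDef {α : Type} [Primcodable α] (c : Code) {k n : α → ℕ} (hk : Primrec k)
    (hn : Primrec n) : PrimrecPred fun a => DefK c (k a) (n a) := by
  have h1 : Primrec fun a => (Code.evaln (k a) c (n a)) :=
    Code.primrec_evaln.comp ((hk.pair (Primrec.const c)).pair hn)
  exact Primrec.eq.comp (Primrec.option_isSome.comp h1) (Primrec.const true)

theorem ppStage (c : Code) :
    PrimrecPred fun p : (Seq × ℕ) × ℕ => StageK c p.1.1 p.1.2 p.2 := by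
  have hσ : Primrec fun p : (Seq × ℕ) × ℕ => p.1.1 := fst.comp fst
  have hx : Primrec fun p : (Seq × ℕ) × ℕ => p.1.2 := snd.comp fst
  have hk : Primrec fun p : (Seq × ℕ) × ℕ => p.2 := snd
  have ht : Primrec fun q : ((Seq × ℕ) × ℕ) × ℕ => q.1.1.1.take q.2 :=
    Primrec.list_take.comp snd (hσ.comp fst)
  unfold StageK
  refine PrimrecPred.or (ppExists hσ ?_) (PrimrecPred.and (PrimrecPred.not (ppExists hσ ?_))
    (PrimrecPred.and (ppForall ?_ (PrimrecPred.or (PrimrecPred.not (ppForall (hσ.comp fst) ?_))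
      (PrimrecPred.and ?_ (ppForall (hσ.comp fst) ?_))))
      (PrimrecPred.or ?_ (ppExists hσ ?_))))
  · exact Primrec.eq.comp snd ((hx.comp fst).pair (Primrec.const true))
  · exact Primrec.eq.comp snd ((hx.comp fst).pair (Primrec.const false))
  · exact Primrec.list_range.comp (Primrec.succ.comp (Primrec.list_length.comp hσ))
  · refine PrimrecPred.or (Primrec.eq.comp (snd.comp snd) (Primrec.const false)) ?_
    exact ppExists (ht.comp fst) (Primrec.eq.comp snd (snd.comp fst))
  · exact ppDef c (hk.comp fst) (Primrec.encode.comp ht)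
  · refine PrimrecPred.or (Primrec.eq.comp (snd.comp snd) (Primrec.const false)) ?_
    exact ppHit c (hk.comp (fst.comp fst)) (Primrec.encode.comp (ht.comp fst)) (fst.comp snd)
  · exact ppHit c hk (Primrec.encode.comp hσ) hx
  · refine PrimrecPred.and (Primrec.eq.comp (snd.comp snd) (Primrec.const false)) ?_
    exact ppHit c (hk.comp fst) (Primrec.encode.comp (hσ.comp fst)) (fst.comp snd)

theorem HitK_mono {c : Code} {k k' n y : ℕ} (hk : k ≤ k') (h : HitK c k n y) :
    HitK c k' n y := by
  unfold HitK at *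
  rw [Option.isSome_iff_exists] at *
  obtain ⟨a, ha⟩ := h
  obtain ⟨e, he, ha⟩ := Option.bind_eq_some_iff.1 ha
  exact ⟨a, Option.bind_eq_some_iff.2 ⟨e, Code.evaln_mono hk he, Code.evaln_mono hk ha⟩⟩

theorem DefK_mono {c : Code} {k k' n : ℕ} (hk : k ≤ k') (h : DefK c k n) :
    DefK c k' n := by
  unfold DefK at *
  rw [Option.isSome_iff_exists] at *
  obtain ⟨a, ha⟩ := h
  exact ⟨a, Code.evaln_mono hk ha⟩

theorem exists_HitK {c : Code} {n y : ℕ} : (∃ k, HitK c k n y) ↔ ∃ e ∈ c.eval n, y ∈ W e := by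
  constructor
  · rintro ⟨k, h⟩
    unfold HitK at h
    rw [Option.isSome_iff_exists] at h
    obtain ⟨a, ha⟩ := h
    obtain ⟨e, he, ha⟩ := Option.bind_eq_some_iff.1 ha
    exact ⟨e, Code.evaln_sound he, Part.dom_iff_mem.2 ⟨a, Code.evaln_sound ha⟩⟩
  · rintro ⟨e, he, hy⟩
    obtain ⟨a, ha⟩ := Part.dom_iff_mem.1 hy
    obtain ⟨k1, h1⟩ := Code.evaln_complete.1 he
    obtain ⟨k2, h2⟩ := Code.evaln_complete.1 ha
    refine ⟨max k1 k2, ?_⟩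
    unfold HitK
    rw [Option.isSome_iff_exists]
    exact ⟨a, Option.bind_eq_some_iff.2 ⟨e, Code.evaln_mono (le_max_left _ _) h1,
      Code.evaln_mono (le_max_right _ _) h2⟩⟩

theorem exists_DefK {c : Code} {n : ℕ} : (∃ k, DefK c k n) ↔ ∃ e, e ∈ c.eval n := by
  constructor
  · rintro ⟨k, h⟩
    unfold DefK at h
    rw [Option.isSome_iff_exists] at h
    obtain ⟨a, ha⟩ := h
    exact ⟨a, Code.evaln_sound ha⟩
  · rintro ⟨e, he⟩
    obtain ⟨k1, h1⟩ := Code.evaln_complete.1 he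
    exact ⟨k1, Option.isSome_iff_exists.2 ⟨e, h1⟩⟩

/-- Collection: bounded quantifier over a list commutes with a monotone existential. -/
theorem list_collect {β : Type} (l : List β) (P : β → ℕ → Prop)
    (hm : ∀ b k k', k ≤ k' → P b k → P b k') (h : ∀ b ∈ l, ∃ k, P b k) :
    ∃ k, ∀ b ∈ l, P b k := by
  induction l with
  | nil => exact ⟨0, by simp⟩
  | cons a l ih =>
    obtain ⟨k1, h1⟩ := ih fun b hb => h b (List.mem_cons_of_mem _ hb)
    obtain ⟨k2, h2⟩ := h a List.mem_cons_self
    refine ⟨max k1 k2, fun b hb => ?_⟩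
    rcases List.mem_cons.1 hb with rfl | hb
    · exact hm _ _ _ (le_max_right _ _) h2
    · exact hm _ _ _ (le_max_left _ _) (h1 b hb)

theorem sub_take_iff (σ : Seq) (i : ℕ) :
    (∀ d ∈ σ, d.2 = false ∨ ∃ d' ∈ σ.take i, d' = d) ↔ posS σ ⊆ posS (σ.take i) := by
  constructor
  · intro h x hx
    rcases h _ hx with h | ⟨d', hd, rfl⟩
    · simp at h
    · exact hd
  · rintro h ⟨y, b⟩ hd
    cases b
    · exact Or.inl rfl
    · exact Or.inr ⟨_, h hd, rfl⟩

theorem exists_StageK (c : Code) (σ : Seq) (x : ℕ) :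
    (∃ k, StageK c σ x k) ↔ x ∈ NewLang c.eval σ := by
  constructor
  · rintro ⟨k, ⟨d, hd, rfl⟩ | ⟨h1, h2, h3⟩⟩
    · exact Or.inl hd
    · refine Or.inr ⟨fun hx => h1 ⟨_, hx, rfl⟩, fun i hi hs => ?_, ?_⟩
      · rcases h2 i (List.mem_range.2 (by omega)) with h | ⟨hd, hh⟩
        · exact absurd ((sub_take_iff σ i).2 hs) h
        · obtain ⟨e, he⟩ := exists_DefK.1 ⟨k, hd⟩
          refine ⟨e, he, fun y hy => ?_⟩
          rcases hh _ hy with h | h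
          · simp at h
          · obtain ⟨e', he', hy'⟩ := exists_HitK.1 ⟨k, h⟩
            exact Part.mem_unique he he' ▸ hy'
      · rcases h3 with h | ⟨⟨y, b⟩, hd, hb, h⟩
        · obtain ⟨e, he, hx⟩ := exists_HitK.1 ⟨k, h⟩
          exact ⟨e, he, Or.inl hx⟩
        · obtain ⟨e, he, hx⟩ := exists_HitK.1 ⟨k, h⟩
          obtain rfl : b = false := hb
          exact ⟨e, he, Or.inr ⟨y, hd, hx⟩⟩
  · rintro (h | ⟨h1, h2, h3⟩)
    · exact ⟨0, Or.inl ⟨_, h, rfl⟩⟩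
    · have H2 : ∃ k, ∀ i ∈ List.range (σ.length + 1),
          (¬ ∀ d ∈ σ, d.2 = false ∨ ∃ d' ∈ σ.take i, d' = d) ∨
          (DefK c k (Encodable.encode (σ.take i)) ∧
            ∀ d ∈ σ, d.2 = false ∨ HitK c k (Encodable.encode (σ.take i)) d.1) := by
        apply list_collect
        · rintro i k k' hk (h | ⟨h, h'⟩)
          · exact Or.inl h
          · exact Or.inr ⟨DefK_mono hk h, fun d hd => (h' d hd).imp_right (HitK_mono hk)⟩
        · intro i hi
          by_cases hs : posS σ ⊆ posS (σ.take i)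
          · obtain ⟨e, he, hsub⟩ := h2 i (by have := List.mem_range.1 hi; omega) hs
            obtain ⟨k1, hk1⟩ := exists_DefK.2 ⟨e, he⟩
            obtain ⟨k2, hk2⟩ := list_collect σ
              (fun d k => d.2 = false ∨ HitK c k (Encodable.encode (σ.take i)) d.1)
              (fun d k k' hk h => h.imp_right (HitK_mono hk))
              (by
                rintro ⟨y, b⟩ hd
                cases b
                · exact ⟨0, Or.inl rfl⟩
                · obtain ⟨k, hk⟩ := exists_HitK.2 ⟨e, he, hsub hd⟩
                  exact ⟨k, Or.inr hk⟩)
            exact ⟨max k1 k2, Or.inr ⟨DefK_mono (le_max_left _ _) hk1, fun d hd =>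
              (hk2 d hd).imp_right (HitK_mono (le_max_right _ _))⟩⟩
          · exact ⟨0, Or.inl fun h => hs ((sub_take_iff σ i).1 h)⟩
      have H3 : ∃ k, (HitK c k (Encodable.encode σ) x ∨
          ∃ d ∈ σ, d.2 = false ∧ HitK c k (Encodable.encode σ) d.1) := by
        obtain ⟨e, he, hx | ⟨y, hy, hye⟩⟩ := h3
        · obtain ⟨k, hk⟩ := exists_HitK.2 ⟨e, he, hx⟩
          exact ⟨k, Or.inl hk⟩
        · obtain ⟨k, hk⟩ := exists_HitK.2 ⟨e, he, hye⟩
          exact ⟨k, Or.inr ⟨_, hy, rfl, hk⟩⟩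
      obtain ⟨k2, hk2⟩ := H2
      obtain ⟨k3, hk3⟩ := H3
      refine ⟨max k2 k3, Or.inr ⟨?_, fun i hi => ?_, ?_⟩⟩
      · rintro ⟨d, hd, rfl⟩
        exact h1 hd
      · exact (hk2 i hi).imp_right fun h => ⟨DefK_mono (le_max_left _ _) h.1, fun d hd =>
          (h.2 d hd).imp_right (HitK_mono (le_max_left _ _))⟩
      · exact hk3.imp (HitK_mono (le_max_right _ _)) fun ⟨d, hd, hb, h⟩ =>
          ⟨d, hd, hb, HitK_mono (le_max_right _ _) h⟩

/-- There is a computable learner whose hypotheses describe `NewLang h`. -/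
theorem exists_newLearner (h : Learner) (hh : Partrec h) :
    ∃ f : ℕ → ℕ, Computable f ∧ ∀ σ : Seq, W (f (Encodable.encode σ)) = NewLang h σ := by
  obtain ⟨c, rfl⟩ := Code.exists_code.1 (Partrec.nat_iff.1 hh)
  obtain ⟨inst, hS⟩ := ppStage c
  let dec : ℕ → Seq := fun n => ((Encodable.decode n : Option Seq).getD [])
  have hdec : Primrec dec := Primrec.option_getD.comp Primrec.decode (Primrec.const [])
  let g : ℕ →. ℕ := fun n => Nat.rfindOpt fun k =>
    bif @decide _ (inst ((dec n.unpair.1, n.unpair.2), k)) then some 0 else none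
  have hg : Partrec g := by
    apply Partrec.rfindOpt
    refine Primrec₂.to_comp ?_
    refine Primrec.cond (hS.comp ?_) (Primrec.const _) (Primrec.const _)
    exact ((hdec.comp (fst.comp (Primrec.unpair.comp fst))).pair
      (snd.comp (Primrec.unpair.comp fst))).pair snd
  obtain ⟨c', hc'⟩ := Code.exists_code.1 (Partrec.nat_iff.1 hg)
  refine ⟨fun s => Encodable.encode (Code.curry c' s), ?_, ?_⟩
  · exact (Primrec.encode.comp (Code.primrec₂_curry.comp (Primrec.const c') Primrec.id)).to_comp
  · intro σ
    ext x
    rw [← exists_StageK]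
    simp only [W, Set.mem_ofPred_eq, Denumerable.ofNat_encode, Code.eval_curry, hc', g,
      Nat.rfindOpt_dom, Nat.unpair_pair, dec, Encodable.encodek, Option.getD_some]
    constructor
    · rintro ⟨k, a, ha⟩
      refine ⟨k, ?_⟩
      by_contra hn
      simp [hn] at ha
    · rintro ⟨k, hk⟩
      exact ⟨k, 0, by simp [hk]⟩

end comp

theorem take_segment (I : Informant) {i n : ℕ} (h : i ≤ n) :
    (segment I n).take i = segment I i := by
  unfold segment
  rw [← List.map_take, List.take_range, min_eq_left h]

theorem length_segment (I : Informant) (n : ℕ) : (segment I n).length = n := by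
  simp [segment]

theorem mem_segment {I : Informant} {n : ℕ} {d : Datum} :
    d ∈ segment I n ↔ ∃ i < n, I i = d := by
  simp [segment]

theorem posS_mono (I : Informant) {s t : ℕ} (h : s ≤ t) :
    posS (segment I s) ⊆ posS (segment I t) := by
  intro x hx
  obtain ⟨i, hi, h'⟩ := mem_segment.1 hx
  exact mem_segment.2 ⟨i, by omega, h'⟩

theorem negS_mono (I : Informant) {s t : ℕ} (h : s ≤ t) :
    negS (segment I s) ⊆ negS (segment I t) := by
  intro x hx
  obtain ⟨i, hi, h'⟩ := mem_segment.1 hx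
  exact mem_segment.2 ⟨i, by omega, h'⟩

theorem posS_sub (I : Informant) (t : ℕ) : posS (segment I t) ⊆ posI I := by
  intro x hx
  obtain ⟨i, hi, h'⟩ := mem_segment.1 hx
  exact ⟨i, h'⟩

theorem negS_sub (I : Informant) (t : ℕ) : negS (segment I t) ⊆ negI I := by
  intro x hx
  obtain ⟨i, hi, h'⟩ := mem_segment.1 hx
  exact ⟨i, h'⟩

theorem not_pos_neg {I : Informant} (hI : IsInf I) {x : ℕ} (h1 : x ∈ posI I) (h2 : x ∈ negI I) :
    False := by
  rw [hI.2] at h2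
  exact h2 h1

/-- All hypotheses since the last new positive datum cover the positive data. -/
def Good (p : HypSeq) (I : Informant) (t : ℕ) : Prop :=
  ∀ i ≤ t, posS (segment I t) ⊆ posS (segment I i) → ∃ e ∈ p i, posS (segment I t) ⊆ W e

theorem mem_NewLang (h : Learner) (I : Informant) (t x : ℕ) :
    x ∈ NewLang h (segment I t) ↔ x ∈ posS (segment I t) ∨ (x ∉ negS (segment I t) ∧
      Good (Gop h I) I t ∧
      ∃ e ∈ Gop h I t, x ∈ W e ∨ ∃ y ∈ negS (segment I t), y ∈ W e) := by
  have : Good (Gop h I) I t ↔ (∀ i ≤ (segment I t).length,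
      posS (segment I t) ⊆ posS ((segment I t).take i) →
      ∃ e ∈ h (Encodable.encode ((segment I t).take i)), posS (segment I t) ⊆ W e) := by
    rw [length_segment]
    refine forall₂_congr fun i hi => ?_
    rw [take_segment I hi]
    rfl
  rw [this]
  rfl

theorem NewLang_bad {h : Learner} {I : Informant} {t : ℕ} (hb : ¬ Good (Gop h I) I t) :
    NewLang h (segment I t) = posS (segment I t) := by
  ext x
  rw [mem_NewLang]
  tauto

theorem NewLang_good {h : Learner} {I : Informant} {t e : ℕ} (hg : Good (Gop h I) I t)
    (he : e ∈ Gop h I t) (hc : ConsH e (segment I t)) :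
    NewLang h (segment I t) = W e := by
  ext x
  rw [mem_NewLang]
  constructor
  · rintro (hx | ⟨_, _, e', he', hx | ⟨y, hy, hye⟩⟩)
    · exact hc.1 hx
    · exact Part.mem_unique he' he ▸ hx
    · rw [Part.mem_unique he' he] at hye
      exact absurd (show y ∈ negS (segment I t) ∩ W e from ⟨hy, hye⟩) (by rw [hc.2]; simp)
  · intro hx
    refine Or.inr ⟨fun hn => ?_, hg, e, he, Or.inl hx⟩
    exact absurd (show x ∈ negS (segment I t) ∩ W e from ⟨hn, hx⟩) (by rw [hc.2]; simp)

theorem NewLang_cons (h : Learner) {I : Informant} (hI : IsInf I) (t : ℕ) :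
    posS (segment I t) ⊆ NewLang h (segment I t) ∧
      ∀ x ∈ NewLang h (segment I t), x ∉ negS (segment I t) := by
  constructor
  · intro x hx
    exact Or.inl hx
  · intro x hx hn
    rcases hx with hx | hx
    · exact not_pos_neg hI (posS_sub I t hx) (negS_sub I t hn)
    · exact hx.1 hn

theorem NewLang_wmond (h : Learner) {I : Informant} (hI : IsInf I) (hw : WMond (Gop h I) I)
    {s t : ℕ} (hst : s ≤ t) (hp : posS (segment I t) ⊆ NewLang h (segment I s))
    (hn : ∀ x ∈ NewLang h (segment I s), x ∉ negS (segment I t)) :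
    NewLang h (segment I t) ⊆ NewLang h (segment I s) := by
  by_cases gt : Good (Gop h I) I t
  swap
  · rw [NewLang_bad gt]; exact hp
  by_cases gs : Good (Gop h I) I s
  swap
  · rw [NewLang_bad gs] at hp
    refine absurd (fun i hi hsub => ?_) gs
    obtain ⟨e, he, hsub'⟩ := gt i (hi.trans hst) (hp.trans hsub)
    exact ⟨e, he, (posS_mono I hst).trans hsub'⟩
  obtain ⟨e, he, hes⟩ := gs s le_rfl subset_rfl
  obtain ⟨e', he', hes'⟩ := gt t le_rfl subset_rfl
  by_cases hc : negS (segment I s) ∩ W e = ∅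
  · have hWs := NewLang_good gs he ⟨hes, hc⟩
    rw [hWs] at hp hn ⊢
    have hct : ConsH e (segment I t) := ⟨hp, by
      ext x
      simp only [Set.mem_inter_iff, Set.mem_empty_iff_false, iff_false]
      rintro ⟨h1, h2⟩
      exact hn x h2 h1⟩
    have hsub := hw s t hst e he hct e' he'
    rw [NewLang_good gt he' ⟨hes', ?_⟩]
    · exact hsub
    · ext x
      simp only [Set.mem_inter_iff, Set.mem_empty_iff_false, iff_false]
      rintro ⟨h1, h2⟩
      exact hn x (hsub h2) h1
  · obtain ⟨y, hy, hye⟩ := Set.nonempty_iff_ne_empty.2 hc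
    intro x hx
    rw [mem_NewLang]
    exact Or.inr ⟨fun hx' => (NewLang_cons h hI t).2 x hx (negS_mono I hst hx'), gs, e, he,
      Or.inr ⟨y, hy, hye⟩⟩

theorem NewLang_bc (h : Learner) {I : Informant} (hI : IsInf I) (hb : Bc (Gop h I) I) :
    ∀ᶠ n in atTop, NewLang h (segment I n) = posI I := by
  obtain ⟨N, hN⟩ := eventually_atTop.1 hb
  -- once the hypotheses are correct, a good stage is correct
  have good : ∀ n ≥ N, Good (Gop h I) I n → NewLang h (segment I n) = posI I := by
    intro n hn hg
    obtain ⟨e, he, hW⟩ := hN n hn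
    rw [NewLang_good hg he ⟨hW ▸ posS_sub I n, ?_⟩, hW]
    ext x
    simp only [Set.mem_inter_iff, Set.mem_empty_iff_false, iff_false, hW]
    rintro ⟨h1, h2⟩
    exact not_pos_neg hI h2 (negS_sub I n h1)
  by_cases hfin : ∃ M, posI I ⊆ posS (segment I M)
  · obtain ⟨M, hM⟩ := hfin
    refine eventually_atTop.2 ⟨max N M, fun n hn => ?_⟩
    by_cases hg : Good (Gop h I) I n
    · exact good n (le_trans (le_max_left _ _) hn) hg
    · rw [NewLang_bad hg]
      exact (posS_sub I n).antisymm
        (hM.trans (posS_mono I (le_trans (le_max_right _ _) hn)))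
  · push Not at hfin
    obtain ⟨x, hx, hxN⟩ := Set.not_subset.1 (hfin N)
    obtain ⟨m, hm⟩ := hx
    refine eventually_atTop.2 ⟨max N (m + 1), fun n hn => ?_⟩
    have hnN := le_trans (le_max_left _ _) hn
    have hnm := le_trans (le_max_right _ _) hn
    refine good n hnN fun i hi hsub => ?_
    have hxi : x ∈ posS (segment I i) := hsub (mem_segment.2 ⟨m, by omega, hm⟩)
    have hNi : N ≤ i := by
      by_contra hlt
      exact hxN (posS_mono I (by omega) hxi)
    obtain ⟨e, he, hW⟩ := hN i hNi
    exact ⟨e, he, hW ▸ posS_sub I n⟩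

/-- `[τ(Cons) Inf G WMon^d Bc] = [Inf G WMon^d Bc]`. -/
theorem global_cons_no_restriction_dual_wmon_bc :
    Learnable Cons AllL AllI Gop (fun p I => WMond p I ∧ Bc p I) =
      Learnable TT AllL AllI Gop (fun p I => WMond p I ∧ Bc p I) := by
  ext 𝓛
  constructor
  · rintro ⟨h, h1, h2, _, h4⟩
    exact ⟨h, h1, h2, fun _ _ _ => trivial, h4⟩
  · rintro ⟨h, h1, -, -, h4⟩
    obtain ⟨f, hf, hW⟩ := exists_newLearner h h1
    have mem : ∀ (I : Informant) (n e : ℕ),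
        e ∈ Gop (fun m => Part.some (f m)) I n ↔ e = f (Encodable.encode (segment I n)) := by
      intro I n e
      exact Part.mem_some_iff
    refine ⟨fun m => Part.some (f m), hf, trivial, ?_, ?_⟩
    · intro I hI _ n
      refine ⟨_, (mem I n _).2 rfl, ?_, ?_⟩
      · rw [hW]
        exact (NewLang_cons h hI n).1
      · rw [hW]
        ext x
        simp only [Set.mem_inter_iff, Set.mem_empty_iff_false, iff_false]
        rintro ⟨a, b⟩
        exact (NewLang_cons h hI n).2 x b a
    · intro L hL
      obtain ⟨hre, hlearn⟩ := h4 L hL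
      refine ⟨hre, fun I hP hIL => ?_⟩
      obtain ⟨hw, hb⟩ := hlearn I hP hIL
      have hI : IsInf I := ⟨rfl, by rw [hIL.2, hIL.1]⟩
      constructor
      · intro s t hst e he hc e' he'
        rw [mem] at he he'
        subst he he'
        obtain ⟨hc1, hc2⟩ := hc
        rw [hW] at hc1 hc2 ⊢
        rw [hW]
        refine NewLang_wmond h hI hw hst hc1 fun x hx hn => ?_
        exact absurd (show x ∈ negS (segment I t) ∩ NewLang h (segment I s) from ⟨hn, hx⟩)
          (by rw [hc2]; simp)
      · filter_upwards [NewLang_bc h hI hb] with n hn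
        exact ⟨_, (mem I n _).2 rfl, by rw [hW, hn]⟩

end InfBc
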